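/- In the game 7-Sim, consider the position consisting of a drawn K_5 on 5 of the 7 vertices, with all other edges of K_7 uncolored and PI to move. Then PI has a winning strategy from this position. -/

import Mathlib

/-- The set of valid (non-loop) edges of the complete graph on `Fin n`. -/
def simEdges (n : ℕ) : Finset (Sym2 (Fin n)) :=
  Finset.univ.filter (fun e => ¬ e.IsDiag)

/-- An edge set `S` contains a triangle: three edges of `S` spanned by three
distinct vertices. -/
def HasTriangle {n : ℕ} (S : Finset (Sym2 (Fin n))) : Prop :=
  ∃ a b c : Fin n, a ≠ b ∧ a ≠ c ∧ b ≠ c ∧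
    s(a, b) ∈ S ∧ s(a, c) ∈ S ∧ s(b, c) ∈ S

/-- The uncolored edges, given the two players' edge sets. -/
def avail {n : ℕ} (A B : Finset (Sym2 (Fin n))) : Finset (Sym2 (Fin n)) :=
  simEdges n \ (A ∪ B)

/-- `MoverWins own opp` : in the game of n-Sim (players alternately claim an
uncolored edge of `K n`, and whoever first has a triangle in their own edges
loses), the player about to move, whose already-claimed edges are `own` while
the opponent's are `opp`, has a winning strategy.

The mover wins iff they can claim some uncolored edge `e` not creating a
triangle in their own color, so that afterwards the opponent still has to move
(there is an uncolored edge left; otherwise the game is a draw), and every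
reply `f` of the opponent either completes a triangle in the opponent's color
(so the opponent loses) or leads to a position where the original mover again
wins. -/
inductive MoverWins {n : ℕ} : Finset (Sym2 (Fin n)) → Finset (Sym2 (Fin n)) → Prop where
  | step (own opp : Finset (Sym2 (Fin n))) (e : Sym2 (Fin n))
      (he : e ∈ avail own opp)
      (hsafe : ¬ HasTriangle (insert e own))
      (hne : (avail opp (insert e own)).Nonempty)
      (hreplies : ∀ f ∈ avail opp (insert e own), ¬ HasTriangle (insert f opp) →
        MoverWins (insert e own) (insert f opp)) :
      MoverWins own opp

/-- `NonMoverWins own opp` : the player NOT about to move (the one whose edges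
are `opp`) has a winning strategy: there is at least one uncolored edge (the
mover must move), and every non-losing move of the mover leads to a position
won by the (new) mover, i.e. by the original non-mover. -/
def NonMoverWins {n : ℕ} (own opp : Finset (Sym2 (Fin n))) : Prop :=
  (avail own opp).Nonempty ∧
    ∀ e ∈ avail own opp, ¬ HasTriangle (insert e own) →
      MoverWins opp (insert e own)

/-- The green edges of a drawn `K₅` on the five distinct vertices
`v 0, …, v 4`: the pentagon `v i — v (i+1)`. -/
def greenK5 {n : ℕ} (v : Fin 5 → Fin n) : Finset (Sym2 (Fin n)) :=
  Finset.univ.image (fun i : Fin 5 => s(v i, v (i + 1)))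

/-- The red edges of a drawn `K₅` on the five distinct vertices
`v 0, …, v 4`: the complementary pentagram `v i — v (i+2)`. -/
def redK5 {n : ℕ} (v : Fin 5 → Fin n) : Finset (Sym2 (Fin n)) :=
  Finset.univ.image (fun i : Fin 5 => s(v i, v (i + 2)))

/-!
Call the two vertices `5`, `6` outside the drawn `K₅` apexes and their edges to the `K₅` spokes.
An apex can safely have at most two red spokes, with ends adjacent on the green pentagon, and at
most two green spokes, with ends adjacent on the red pentagram.

Green first joins the apexes, so that only spokes remain. By symmetry red takes `5 — 0`, and green
answers `6 — 0`. Whatever red plays next, green can force a position where red has at most as many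
safe moves left as green has edges in reserve, that is, edges which are forbidden to red and which
green can safely take all together. From there red is the first to run out of safe moves, and
because `R(3, 3) = 6` the game cannot end in a draw.
-/

section Triangles

variable {n : ℕ} {A B S T : Finset (Sym2 (Fin n))}

instance (S : Finset (Sym2 (Fin n))) : Decidable (HasTriangle S) := by
  unfold HasTriangle; infer_instance

lemma HasTriangle.mono (hST : S ⊆ T) : HasTriangle S → HasTriangle T
  | ⟨a, b, c, hab, hac, hbc, h₁, h₂, h₃⟩ =>
    ⟨a, b, c, hab, hac, hbc, hST h₁, hST h₂, hST h₃⟩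

lemma mem_avail {e : Sym2 (Fin n)} : e ∈ avail A B ↔ ¬ e.IsDiag ∧ e ∉ A ∧ e ∉ B := by
  simp [avail, simEdges]

lemma hasTriangle_or_of_two_lt_card_neighbors (hAB : ∀ a b, a ≠ b → s(a, b) ∈ A ∪ B)
    {x : Fin n} (hx : 2 < (Finset.univ.filter fun y => x ≠ y ∧ s(x, y) ∈ A).card) :
    HasTriangle A ∨ HasTriangle B := by
  obtain ⟨a, ha, b, hb, c, hc, hab, hac, hbc⟩ := Finset.two_lt_card.1 hx
  simp only [Finset.mem_filter, Finset.mem_univ, true_and] at ha hb hc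
  have triangle_or_mem {y z : Fin n} (hy : x ≠ y ∧ s(x, y) ∈ A) (hz : x ≠ z ∧ s(x, z) ∈ A)
      (hyz : y ≠ z) : HasTriangle A ∨ s(y, z) ∈ B :=
    (Finset.mem_union.1 (hAB y z hyz)).imp_left
      fun h => ⟨x, y, z, hy.1, hz.1, hyz, hy.2, hz.2, h⟩
  rcases triangle_or_mem ha hb hab with h | h₁
  · exact .inl h
  rcases triangle_or_mem ha hc hac with h | h₂
  · exact .inl h
  exact (triangle_or_mem hb hc hbc).imp_right fun h₃ => ⟨a, b, c, hab, hac, hbc, h₁, h₂, h₃⟩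

-- This is the Ramsey bound `R(3, 3) ≤ 6`.
lemma avail_nonempty_of_not_hasTriangle (hn : 6 ≤ n) (hA : ¬ HasTriangle A)
    (hB : ¬ HasTriangle B) : (avail A B).Nonempty := by
  by_contra! hempty
  have hAB : ∀ a b, a ≠ b → s(a, b) ∈ A ∪ B := fun a b hab => by
    by_contra h
    have : s(a, b) ∈ avail A B := by simpa [mem_avail, hab] using h
    simp [hempty] at this
  let x : Fin n := ⟨0, by lia⟩
  let neighbors (C : Finset (Sym2 (Fin n))) := Finset.univ.filter fun y => x ≠ y ∧ s(x, y) ∈ C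
  have hcover : Finset.univ.erase x ⊆ neighbors A ∪ neighbors B := fun y hy => by
    have hxy : x ≠ y := (Finset.ne_of_mem_erase hy).symm
    simpa [neighbors, hxy] using hAB x y hxy
  have hcard : 5 ≤ (neighbors A).card + (neighbors B).card := calc
    5 ≤ (Finset.univ.erase x).card := by simp; lia
    _ ≤ (neighbors A ∪ neighbors B).card := Finset.card_le_card hcover
    _ ≤ _ := Finset.card_union_le _ _
  obtain h | h : 2 < (neighbors A).card ∨ 2 < (neighbors B).card := by lia
  · exact (hasTriangle_or_of_two_lt_card_neighbors hAB h).elim hA hB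
  · exact (hasTriangle_or_of_two_lt_card_neighbors (by simpa [or_comm] using hAB) h).elim hB hA

end Triangles

section Relabelling

variable {n : ℕ} (σ : Equiv.Perm (Fin n))

lemma HasTriangle.image {S : Finset (Sym2 (Fin n))} :
    HasTriangle S → HasTriangle (S.image (Sym2.map σ))
  | ⟨a, b, c, hab, hac, hbc, h₁, h₂, h₃⟩ =>
    ⟨σ a, σ b, σ c, σ.injective.ne hab, σ.injective.ne hac, σ.injective.ne hbc,
      Finset.mem_image_of_mem _ h₁, Finset.mem_image_of_mem _ h₂, Finset.mem_image_of_mem _ h₃⟩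

lemma hasTriangle_image_iff {S : Finset (Sym2 (Fin n))} :
    HasTriangle (S.image (Sym2.map σ)) ↔ HasTriangle S := by
  refine ⟨fun h => ?_, .image σ⟩
  simpa [Finset.image_image, ← Sym2.map_comp] using h.image σ.symm

lemma avail_image (A B : Finset (Sym2 (Fin n))) :
    avail (A.image (Sym2.map σ)) (B.image (Sym2.map σ)) = (avail A B).image (Sym2.map σ) := by
  have hinj : Function.Injective (Sym2.map σ) := Sym2.map.injective σ.injective
  ext e
  obtain ⟨e, rfl⟩ : ∃ e', Sym2.map σ e' = e := ⟨Sym2.map σ.symm e, by simp [Sym2.map_map]⟩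
  simp only [mem_avail, hinj.mem_finset_image, Sym2.isDiag_map σ.injective]

lemma MoverWins.image {own opp : Finset (Sym2 (Fin n))} (h : MoverWins own opp) :
    MoverWins (own.image (Sym2.map σ)) (opp.image (Sym2.map σ)) := by
  induction h with
  | step own opp e he hsafe hne _ ih =>
    refine .step _ _ (Sym2.map σ e) ?_ ?_ ?_ ?_
    · exact avail_image σ own opp ▸ Finset.mem_image_of_mem _ he
    · rwa [← Finset.image_insert, hasTriangle_image_iff]
    · rw [← Finset.image_insert, avail_image]
      exact hne.image _
    · rw [← Finset.image_insert, avail_image, Finset.forall_mem_image]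
      intro f hf hfsafe
      rw [← Finset.image_insert, hasTriangle_image_iff] at hfsafe
      simpa only [Finset.image_insert] using ih f hf hfsafe

lemma greenK5_perm_comp (v : Fin 5 → Fin n) :
    greenK5 (σ ∘ v) = (greenK5 v).image (Sym2.map σ) := by
  simp [greenK5, Finset.image_image, Function.comp_def]

lemma redK5_perm_comp (v : Fin 5 → Fin n) :
    redK5 (σ ∘ v) = (redK5 v).image (Sym2.map σ) := by
  simp [redK5, Finset.image_image, Function.comp_def]

end Relabelling

section Reserve

variable {n : ℕ}

lemma NonMoverWins.moverWins {own opp : Finset (Sym2 (Fin n))} {e : Sym2 (Fin n)}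
    (h : NonMoverWins opp (insert e own)) (he : e ∈ avail own opp)
    (hsafe : ¬ HasTriangle (insert e own)) : MoverWins own opp :=
  .step own opp e he hsafe h.1 h.2

-- The mover can never take an edge of the reserve `S`, so the opponent answers each safe move
-- with an edge of `S` and the mover runs out of safe moves first.
lemma nonMoverWins_of_reserve (hn : 6 ≤ n) {own opp S : Finset (Sym2 (Fin n))}
    (hown : ¬ HasTriangle own) (hS : S ⊆ avail own opp) (hopp : ¬ HasTriangle (opp ∪ S))
    (hforbidden : ∀ s ∈ S, HasTriangle (insert s own))
    (hcard : ∀ T ⊆ avail own opp, ¬ HasTriangle (own ∪ T) → T.card ≤ S.card) :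
    NonMoverWins own opp := by
  induction S using Finset.induction_on generalizing own opp with
  | empty =>
    refine ⟨avail_nonempty_of_not_hasTriangle hn hown (by simpa using hopp), fun e he hsafe => ?_⟩
    have := hcard {e} (by simpa using he) (by rwa [Finset.union_singleton])
    simp at this
  | insert s S hs ih =>
    have hopp' : ¬ HasTriangle (insert s opp) := fun h => hopp (h.mono (by grind))
    refine ⟨avail_nonempty_of_not_hasTriangle hn hown fun h => hopp (h.mono (by grind)),
      fun e he hsafe => ?_⟩
    have hne : ∀ t ∈ insert s S, t ≠ e := fun t ht hte => hsafe (hte ▸ hforbidden t ht)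
    have hwin : NonMoverWins (insert e own) (insert s opp) := by
      refine ih hsafe ?_ ?_ (fun t ht => ?_) fun T hT hfree => ?_
      · intro t ht
        have := hS (Finset.mem_insert_of_mem ht)
        grind [mem_avail]
      · rwa [Finset.insert_union, ← Finset.union_insert]
      · exact (hforbidden t (Finset.mem_insert_of_mem ht)).mono (by grind)
      · have heT : e ∉ T := fun h => by simpa using (mem_avail.1 (hT h)).2.1
        have hsub : insert e T ⊆ avail own opp := fun t ht => by
          have := @hT t
          grind [mem_avail]
        have := hcard (insert e T) hsub (by rwa [Finset.union_insert, ← Finset.insert_union])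
        rw [Finset.card_insert_of_notMem heT, Finset.card_insert_of_notMem hs] at this
        lia
    refine hwin.moverWins ?_ hopp'
    have := hS (Finset.mem_insert_self s S)
    grind [mem_avail]

end Reserve

section Strategy

/-- The green cycle of the standard drawn `K₅`, which lies on the vertices `0, …, 4` of `K₇`. The
two remaining vertices, the apexes, are `5` and `6`. -/
def pentagon : Finset (Sym2 (Fin 7)) :=
  greenK5 (Fin.castLE (by decide))

/-- The red cycle of the standard drawn `K₅`, on the vertices `0, …, 4` of `K₇`. -/
def pentagram : Finset (Sym2 (Fin 7)) :=
  redK5 (Fin.castLE (by decide))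

/-- The green edges after green has joined the apexes and answered the red edge `5 — 0`
by `6 — 0`. -/
def greenOpening : Finset (Sym2 (Fin 7)) :=
  insert s(6, 0) (insert s(5, 6) pentagon)

/-- The red edges after red's first move, normalised by symmetry to `5 — 0`. -/
def redOpening : Finset (Sym2 (Fin 7)) :=
  insert s(5, 0) pentagram

-- Red has used up its two spokes at `5` and can take at most two at `6`.
lemma moverWins_after_red_5_1 : MoverWins greenOpening (insert s(5, 1) redOpening) := by
  have hcapacity : ∀ T ⊆ avail (insert s(5, 1) redOpening) (insert s(6, 3) greenOpening),
      ¬ HasTriangle (insert s(5, 1) redOpening ∪ T) → T.card ≤ 2 := by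
    decide +kernel
  have hwin : NonMoverWins (insert s(5, 1) redOpening) (insert s(6, 3) greenOpening) :=
    nonMoverWins_of_reserve (S := {s(5, 2), s(5, 4)}) (by decide) (by decide +kernel)
      (by decide +kernel) (by decide +kernel) (by decide +kernel)
      fun T hT hfree => (hcapacity T hT hfree).trans (by decide)
  exact hwin.moverWins (by decide +kernel) (by decide +kernel)

-- Green's reply `6 — 2` takes the last safe red spoke at `6`, and red can still take only one of
-- `5 — 1` and `5 — 4`.
lemma moverWins_after_red_6_1 : MoverWins greenOpening (insert s(6, 1) redOpening) := by
  have hcapacity : ∀ T ⊆ avail (insert s(6, 1) redOpening) (insert s(6, 2) greenOpening),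
      ¬ HasTriangle (insert s(6, 1) redOpening ∪ T) → T.card ≤ 1 := by
    decide +kernel
  have hwin : NonMoverWins (insert s(6, 1) redOpening) (insert s(6, 2) greenOpening) :=
    nonMoverWins_of_reserve (S := {s(5, 3)}) (by decide) (by decide +kernel)
      (by decide +kernel) (by decide +kernel) (by decide +kernel) hcapacity
  exact hwin.moverWins (by decide +kernel) (by decide +kernel)

lemma moverWins_after_red_6_2_5_1 :
    MoverWins (insert s(5, 4) greenOpening) (insert s(5, 1) (insert s(6, 2) redOpening)) := by
  have hcapacity : ∀ T ⊆ avail (insert s(5, 1) (insert s(6, 2) redOpening))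
      (insert s(6, 3) (insert s(5, 4) greenOpening)),
        ¬ HasTriangle (insert s(5, 1) (insert s(6, 2) redOpening) ∪ T) → T.card ≤ 1 := by
    decide +kernel
  have hwin : NonMoverWins (insert s(5, 1) (insert s(6, 2) redOpening))
      (insert s(6, 3) (insert s(5, 4) greenOpening)) :=
    nonMoverWins_of_reserve (S := {s(5, 2)}) (by decide) (by decide +kernel)
      (by decide +kernel) (by decide +kernel) (by decide +kernel) hcapacity
  exact hwin.moverWins (by decide +kernel) (by decide +kernel)

-- Green's reply `5 — 1` leaves red without a safe move.
lemma moverWins_after_red_6_2_6_1_or_6_3 {e : Sym2 (Fin 7)} (he : e = s(6, 1) ∨ e = s(6, 3)) :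
    MoverWins (insert s(5, 4) greenOpening) (insert e (insert s(6, 2) redOpening)) := by
  have hwin : NonMoverWins (insert e (insert s(6, 2) redOpening))
      (insert s(5, 1) (insert s(5, 4) greenOpening)) := by
    rcases he with rfl | rfl <;>
      exact nonMoverWins_of_reserve (S := ∅) (by decide) (by decide +kernel)
        (by decide +kernel) (by decide +kernel) (by decide +kernel) (by decide +kernel)
  refine hwin.moverWins ?_ (by decide +kernel)
  rcases he with rfl | rfl <;> decide +kernel

lemma moverWins_after_red_6_2 : MoverWins greenOpening (insert s(6, 2) redOpening) := by
  have hreplies : ∀ e ∈ avail (insert s(6, 2) redOpening) (insert s(5, 4) greenOpening),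
      ¬ HasTriangle (insert e (insert s(6, 2) redOpening)) →
        e = s(5, 1) ∨ e = s(6, 1) ∨ e = s(6, 3) := by
    decide +kernel
  have hwin : NonMoverWins (insert s(6, 2) redOpening) (insert s(5, 4) greenOpening) := by
    refine ⟨by decide +kernel, fun e he hsafe => ?_⟩
    rcases hreplies e he hsafe with rfl | he
    · exact moverWins_after_red_6_2_5_1
    · exact moverWins_after_red_6_2_6_1_or_6_3 he
  exact hwin.moverWins (by decide +kernel) (by decide +kernel)

/-- The reflection of the pentagon in the axis through `0`, fixing both apexes. -/
def pentagonReflection : Equiv.Perm (Fin 7) :=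
  Equiv.swap 1 4 * Equiv.swap 2 3

lemma moverWins_opening_reflect {e : Sym2 (Fin 7)}
    (h : MoverWins greenOpening (insert e redOpening)) :
    MoverWins greenOpening (insert (Sym2.map pentagonReflection e) redOpening) := by
  have hgreen : greenOpening.image (Sym2.map pentagonReflection) = greenOpening := by decide +kernel
  have hred : redOpening.image (Sym2.map pentagonReflection) = redOpening := by decide +kernel
  simpa only [Finset.image_insert, hgreen, hred] using h.image pentagonReflection

lemma nonMoverWins_opening : NonMoverWins redOpening greenOpening := by
  have hreplies : ∀ e ∈ avail redOpening greenOpening, ¬ HasTriangle (insert e redOpening) →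
      ∃ f ∈ [s(5, 1), s(6, 1), s(6, 2)], e = f ∨ e = Sym2.map pentagonReflection f := by
    decide +kernel
  refine ⟨by decide +kernel, fun e he hsafe => ?_⟩
  obtain ⟨f, hf, hef⟩ := hreplies e he hsafe
  have hwin : MoverWins greenOpening (insert f redOpening) := by
    simp only [List.mem_cons, List.not_mem_nil, or_false] at hf
    rcases hf with rfl | rfl | rfl
    exacts [moverWins_after_red_5_1, moverWins_after_red_6_1, moverWins_after_red_6_2]
  rcases hef with rfl | rfl
  exacts [hwin, moverWins_opening_reflect hwin]

lemma moverWins_after_red_5_0 : MoverWins (insert s(5, 6) pentagon) redOpening :=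
  nonMoverWins_opening.moverWins (by decide +kernel) (by decide +kernel)

/-- The rotation of the pentagon by one step, fixing both apexes. -/
def pentagonRotation : Equiv.Perm (Fin 7) :=
  c[0, 1, 2, 3, 4]

/-- The transposition of the two apexes, fixing the pentagon. -/
def apexSwap : Equiv.Perm (Fin 7) :=
  Equiv.swap 5 6

lemma exists_symmetry_of_mem_avail_pentagram : ∀ e ∈ avail pentagram (insert s(5, 6) pentagon),
    ∃ σ : Equiv.Perm (Fin 7), Sym2.map σ s(5, 0) = e ∧
      (insert s(5, 6) pentagon).image (Sym2.map σ) = insert s(5, 6) pentagon ∧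
      pentagram.image (Sym2.map σ) = pentagram := by
  have hsymmetry : ∀ e ∈ avail pentagram (insert s(5, 6) pentagon), ∃ (i : Fin 5) (j : Fin 2),
      let σ := pentagonRotation ^ i.val * apexSwap ^ j.val
      Sym2.map σ s(5, 0) = e ∧
        (insert s(5, 6) pentagon).image (Sym2.map σ) = insert s(5, 6) pentagon ∧
        pentagram.image (Sym2.map σ) = pentagram := by
    decide +kernel
  intro e he
  obtain ⟨i, j, h⟩ := hsymmetry e he
  exact ⟨_, h⟩

lemma moverWins_pentagon_pentagram : MoverWins pentagon pentagram := by
  have hwin : NonMoverWins pentagram (insert s(5, 6) pentagon) := by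
    refine ⟨by decide +kernel, fun e he _ => ?_⟩
    obtain ⟨σ, rfl, hgreen, hred⟩ := exists_symmetry_of_mem_avail_pentagram e he
    have himage := moverWins_after_red_5_0.image σ
    rwa [hgreen, redOpening, Finset.image_insert, hred] at himage
  exact hwin.moverWins (by decide +kernel) (by decide +kernel)

end Strategy

/-- **Proposition (ii).** In 7-Sim, the position consisting of a drawn `K₅` on
five of the seven vertices, all other edges uncolored, with PI (green) to
move, is a win for PI (the mover). -/
theorem drawn_K5_in_sevenSim_firstPlayerWin (v : Fin 5 → Fin 7)
    (hv : Function.Injective v) :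
    MoverWins (greenK5 v) (redK5 v) := by
  obtain ⟨σ, hσ⟩ := (Equiv.Perm.isMultiplyPretransitive (Fin 7) 5).exists_smul_eq
    (Fin.castLEEmb (by decide)) ⟨v, hv⟩
  obtain rfl : σ ∘ Fin.castLE (by decide) = v := congrArg DFunLike.coe hσ
  rw [greenK5_perm_comp, redK5_perm_comp]
  exact moverWins_pentagon_pentagram.image σ
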